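/- arXiv:1703.10434 — 6 statements merged into one kernel-verified Lean document; each statement's English description precedes it below -/
import Mathlib

section
/- Localisation Lemma: Let N be a number operator on ℂ^d and let F be a covariant phase POM for N. Then for every eigenvector unit vector v of N and every Borel X ⊆ [0,2π), ⟨v, F(X) v⟩ = λ(X)/(2π) (λ = Lebesgue measure), hence tr(F(X)) = d·λ(X)/(2π), and consequently for every state ρ on ℂ^d, tr(ρ F(X)) ≤ d·λ(X)/(2π). -/
open Matrix MeasureTheory
open scoped Kronecker ComplexOrder

noncomputable section

instance : Fact (0 < 2 * Real.pi) := ⟨by positivity⟩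

/-- `U(θ) = exp(iθN) = ∑ₙ e^{inθ} Pₙ` for a number operator `N = ∑ₙ n Pₙ`. -/
def phaseUnitary {d : ℕ} (S : Finset ℤ) (P : ℤ → Matrix (Fin d) (Fin d) ℂ) (θ : ℝ) :
    Matrix (Fin d) (Fin d) ℂ :=
  ∑ n ∈ S, Complex.exp (Complex.I * (n : ℂ) * (θ : ℂ)) • P n

/-!
If a positive matrix `ρ` commutes with every `U(θ)`, cyclicity of the trace and covariance make
`X ↦ tr(ρ F(X))` a translation-invariant finite measure on the circle, hence a multiple of
Lebesgue measure with total mass `tr ρ`. Taking `ρ = v v*` for a unit eigenvector `v` of `N` gives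
the uniform phase distribution, and `ρ = 1` gives the trace of `F(X)`. The bound for a general
state is `ρ ≤ (tr ρ) 1`, tested against the positive matrix `F(X)`.
-/

theorem exists_isFiniteMeasure_eq_measureReal {α : Type*} [MeasurableSpace α] {f : Set α → ℂ}
    (hnonneg : ∀ X, MeasurableSet X → 0 ≤ f X)
    (hsum : ∀ g : ℕ → Set α, (∀ k, MeasurableSet (g k)) → Pairwise (Function.onFun Disjoint g) →
      HasSum (fun k => f (g k)) (f (⋃ k, g k))) :
    ∃ μ : Measure α, IsFiniteMeasure μ ∧ ∀ X, MeasurableSet X → f X = μ.real X := by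
  have hre : ∀ X, MeasurableSet X → 0 ≤ (f X).re := fun X hX =>
    (Complex.nonneg_iff.1 (hnonneg X hX)).1
  have hempty : f ∅ = 0 :=
    (summable_const_iff _).1
      (hsum (fun _ => ∅) (fun _ => .empty) fun _ _ _ => disjoint_bot_left).summable
  let μ : Measure α := Measure.ofMeasurable (fun X _ => ENNReal.ofReal (f X).re) (by simp [hempty])
    fun g hg hdisj => by
      have hsum_re := Complex.hasSum_re (hsum g hg hdisj)
      rw [← hsum_re.tsum_eq,
        ENNReal.ofReal_tsum_of_nonneg (fun k => hre _ (hg k)) hsum_re.summable]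
  have hμ : ∀ X, MeasurableSet X → μ X = ENNReal.ofReal (f X).re := Measure.ofMeasurable_apply
  refine ⟨μ, ⟨by simp [hμ _ .univ]⟩, fun X hX => ?_⟩
  rw [measureReal_def, hμ X hX, ENNReal.toReal_ofReal (hre X hX)]
  exact Complex.eq_re_of_ofReal_le (hnonneg X hX)

section CompactGroup

variable {G : Type*} [AddGroup G] [TopologicalSpace G] [IsTopologicalAddGroup G] [CompactSpace G]
  [MeasurableSpace G] [BorelSpace G] (ν : Measure G) [ν.IsAddHaarMeasure]

theorem measureReal_eq_of_isAddLeftInvariant (μ : Measure G) [IsFiniteMeasure μ]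
    [μ.IsAddLeftInvariant] (X : Set G) :
    μ.real X = μ.real Set.univ * (ν.real X / ν.real Set.univ) := by
  have hν : ν.real Set.univ ≠ 0 := measureReal_univ_ne_zero
  rw [Measure.isAddInvariant_eq_smul_of_compactSpace μ ν]
  simp only [measureReal_nnreal_smul_apply]
  field_simp

theorem eq_mul_measureReal_div_of_translate_eq {f : Set G → ℂ}
    (hnonneg : ∀ X, MeasurableSet X → 0 ≤ f X)
    (hsum : ∀ g : ℕ → Set G, (∀ k, MeasurableSet (g k)) → Pairwise (Function.onFun Disjoint g) →
      HasSum (fun k => f (g k)) (f (⋃ k, g k)))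
    (htranslate : ∀ (a : G) (X : Set G), MeasurableSet X → f ((a + ·) '' X) = f X)
    {X : Set G} (hX : MeasurableSet X) :
    f X = f Set.univ * (ν.real X / ν.real Set.univ : ℝ) := by
  obtain ⟨μ, _, hμ⟩ := exists_isFiniteMeasure_eq_measureReal hnonneg hsum
  have hinv : μ.IsAddLeftInvariant := by
    refine ⟨fun a => Measure.ext fun Y hY => ?_⟩
    have hpre : (a + ·) ⁻¹' Y = (-a + ·) '' Y := by rw [Set.image_add_left, neg_neg]
    have hmeas := measurable_const_add a hY
    rw [Measure.map_apply (measurable_const_add a) hY, ← measureReal_eq_measureReal_iff,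
      ← Complex.ofReal_inj, ← hμ _ hmeas, ← hμ Y hY, hpre, htranslate _ Y hY]
  rw [hμ X hX, hμ _ .univ, ← Complex.ofReal_mul, measureReal_eq_of_isAddLeftInvariant ν μ X]

end CompactGroup

section PosSemidef

variable {n 𝕜 : Type*} [Fintype n] [RCLike 𝕜] {A B : Matrix n n 𝕜}

theorem trace_vecMulVec_mul {R : Type*} [CommSemiring R] (v w : n → R) (A : Matrix n n R) :
    (vecMulVec v w * A).trace = w ⬝ᵥ A *ᵥ v := by
  rw [vecMulVec_mul, trace_vecMulVec, dotProduct_comm, dotProduct_mulVec]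

theorem trace_mul_nonneg_of_posSemidef (hA : A.PosSemidef) (hB : B.PosSemidef) :
    0 ≤ (A * B).trace := by
  obtain ⟨m, v, rfl⟩ := posSemidef_iff_eq_sum_vecMulVec.1 hA
  simp only [Finset.sum_mul, trace_sum, trace_vecMulVec_mul]
  exact Finset.sum_nonneg fun i _ => hB.dotProduct_mulVec_nonneg (v i)

theorem posSemidef_trace_smul_one_sub [DecidableEq n] (hA : A.PosSemidef) :
    (A.trace • (1 : Matrix n n 𝕜) - A).PosSemidef := by
  set t := A.trace with ht
  have hle : ∀ i, (hA.1.eigenvalues i : 𝕜) ≤ t := fun i => by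
    rw [ht, hA.1.trace_eq_sum_eigenvalues]
    exact Finset.single_le_sum (f := fun j => (hA.1.eigenvalues j : 𝕜))
      (fun j _ => by simpa using hA.eigenvalues_nonneg j) (Finset.mem_univ i)
  have hdiag : t • (1 : Matrix n n 𝕜) - A = Unitary.conjStarAlgAut 𝕜 _ hA.1.eigenvectorUnitary
      (diagonal fun i => t - hA.1.eigenvalues i) := by
    have hone : (diagonal fun _ => t : Matrix n n 𝕜) = t • 1 := (smul_one_eq_diagonal t).symm
    rw [← diagonal_sub, map_sub, hone, map_smul, map_one]
    exact congrArg _ hA.1.spectral_theorem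
  rw [hdiag, Unitary.conjStarAlgAut_apply, Unitary.isUnit_coe.posSemidef_star_right_conjugate_iff,
    posSemidef_diagonal_iff]
  exact fun i => sub_nonneg.2 (hle i)

theorem trace_mul_le_of_posSemidef (hA : A.PosSemidef) (hB : B.PosSemidef) :
    (A * B).trace ≤ A.trace * B.trace := by
  classical
  have hnonneg := trace_mul_nonneg_of_posSemidef (posSemidef_trace_smul_one_sub hA) hB
  rwa [sub_mul, smul_mul, one_mul, trace_sub, trace_smul, smul_eq_mul, sub_nonneg] at hnonneg

end PosSemidef

section OrthogonalIdempotents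

variable {ι R A : Type*} [CommSemiring R] [Semiring A] [Algebra R A] {e : ι → A} {s : Finset ι}

theorem mul_sum_smul_of_orthogonalIdempotents (he : OrthogonalIdempotents e) {i : ι} (hi : i ∈ s)
    (c : ι → R) : e i * ∑ j ∈ s, c j • e j = c i • e i := by
  classical
  simp [Finset.mul_sum, he.mul_eq, hi]

theorem sum_smul_mul_sum_smul_of_orthogonalIdempotents (he : OrthogonalIdempotents e)
    (b c : ι → R) :
    (∑ i ∈ s, b i • e i) * ∑ i ∈ s, c i • e i = ∑ i ∈ s, (b i * c i) • e i := by
  rw [Finset.sum_mul]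
  refine Finset.sum_congr rfl fun i hi => ?_
  rw [smul_mul_assoc, mul_sum_smul_of_orthogonalIdempotents he hi, smul_smul]

end OrthogonalIdempotents

theorem commute_vecMulVec_star {n R : Type*} [Fintype n] [CommSemiring R] [StarRing R]
    {H : Matrix n n R} (hH : H.IsHermitian) {c : R} (hc : IsSelfAdjoint c) {v : n → R}
    (hv : H *ᵥ v = c • v) : Commute H (vecMulVec v (star v)) := by
  have hleft : star v ᵥ* H = c • star v := by
    rw [← hH.eq, ← star_mulVec, hv, star_smul, hc.star_eq]
  rw [commute_iff_eq, mul_vecMulVec, vecMulVec_mul, hv, hleft, smul_vecMulVec, vecMulVec_smul]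

section Eigenvector

variable {ι n K : Type*} [Fintype n] [DecidableEq n] [Field K] {P : ι → Matrix n n K}
  {s : Finset ι} {a : ι → K} {v : n → K} {μ : K} {i : ι}

theorem mulVec_eq_zero_of_sum_smul_mulVec_eq_smul (hP : OrthogonalIdempotents P)
    (hv : (∑ i ∈ s, a i • P i) *ᵥ v = μ • v) (hi : i ∈ s) (hne : a i ≠ μ) : P i *ᵥ v = 0 := by
  have hsmul : a i • P i *ᵥ v = μ • P i *ᵥ v := by
    rw [← mulVec_smul (P i) μ, ← hv, mulVec_mulVec, mul_sum_smul_of_orthogonalIdempotents hP hi,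
      smul_mulVec]
  rw [← sub_eq_zero, ← sub_smul, smul_eq_zero] at hsmul
  exact hsmul.resolve_left (sub_ne_zero.2 hne)

theorem mulVec_eq_zero_or_eq_self_of_sum_smul_mulVec_eq_smul (hP : OrthogonalIdempotents P)
    (hsum : ∑ i ∈ s, P i = 1) (ha : Set.InjOn a s)
    (hv : (∑ i ∈ s, a i • P i) *ᵥ v = μ • v) (hi : i ∈ s) : P i *ᵥ v = 0 ∨ P i *ᵥ v = v := by
  by_cases hμ : a i = μ
  · have hother : ∀ j ∈ s, j ≠ i → P j *ᵥ v = 0 := fun j hj hji =>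
      mulVec_eq_zero_of_sum_smul_mulVec_eq_smul hP hv hj (hμ ▸ ha.ne hj hi hji)
    exact .inr <| calc
      P i *ᵥ v = ∑ j ∈ s, P j *ᵥ v := (Finset.sum_eq_single_of_mem i hi hother).symm
      _ = v := by rw [← sum_mulVec, hsum, one_mulVec]
  · exact .inl (mulVec_eq_zero_of_sum_smul_mulVec_eq_smul hP hv hi hμ)

end Eigenvector

/-- A positive operator measure: a countably additive map from the measurable subsets of `α` to the
positive semidefinite matrices, of total mass `1`. The values on non-measurable sets are
unconstrained. -/
structure IsPOM {α n : Type*} [MeasurableSpace α] [DecidableEq n] (F : Set α → Matrix n n ℂ) :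
    Prop where
  posSemidef : ∀ X, MeasurableSet X → (F X).PosSemidef
  apply_univ : F Set.univ = 1
  hasSum : ∀ g : ℕ → Set α, (∀ k, MeasurableSet (g k)) → Pairwise (Function.onFun Disjoint g) →
    HasSum (fun k => F (g k)) (F (⋃ k, g k))

theorem IsPOM.trace_mul_apply_of_commute {n : Type*} [Fintype n] [DecidableEq n] {T : ℝ}
    [Fact (0 < T)] {F : Set (AddCircle T) → Matrix n n ℂ} (hF : IsPOM F) {U : ℝ → Matrix n n ℂ}
    (hU : ∀ θ, (U θ)ᴴ * U θ = 1)
    (hcov : ∀ (θ : ℝ) (X : Set (AddCircle T)), MeasurableSet X →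
      U θ * F X * (U θ)ᴴ = F ((· + (θ : AddCircle T)) '' X))
    {ρ : Matrix n n ℂ} (hρ : ρ.PosSemidef) (hcomm : ∀ θ, Commute (U θ) ρ)
    {X : Set (AddCircle T)} (hX : MeasurableSet X) :
    (ρ * F X).trace = ρ.trace * (volume.real X / T : ℝ) := by
  have huniv : volume.real (Set.univ : Set (AddCircle T)) = T := by
    rw [measureReal_def, AddCircle.measure_univ, ENNReal.toReal_ofReal (Fact.out : 0 < T).le]
  have hinv : ∀ (a : AddCircle T) (Y : Set (AddCircle T)), MeasurableSet Y →
      (ρ * F ((a + ·) '' Y)).trace = (ρ * F Y).trace := fun a Y hY => by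
    obtain ⟨θ, rfl⟩ := QuotientAddGroup.mk_surjective a
    simp only [add_comm _ (_ : AddCircle T)]
    calc (ρ * F ((· + (θ : AddCircle T)) '' Y)).trace
        = (ρ * U θ * F Y * (U θ)ᴴ).trace := by rw [← hcov θ Y hY]; simp only [mul_assoc]
      _ = ((U θ)ᴴ * U θ * (ρ * F Y)).trace := by
          rw [← (hcomm θ).eq, trace_mul_comm]; simp only [mul_assoc]
      _ = (ρ * F Y).trace := by rw [hU, one_mul]
  have huniform := eq_mul_measureReal_div_of_translate_eq volume (f := fun Y => (ρ * F Y).trace)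
    (fun Y hY => trace_mul_nonneg_of_posSemidef hρ (hF.posSemidef Y hY))
    (fun g hg hdisj => ((hF.hasSum g hg hdisj).mul_left ρ).map (traceAddMonoidHom n ℂ)
      continuous_id.matrix_trace) hinv hX
  simpa only [hF.apply_univ, mul_one, huniv] using huniform

section PhaseUnitary

variable {d : ℕ} {S : Finset ℤ} {P : ℤ → Matrix (Fin d) (Fin d) ℂ}

theorem conjTranspose_phaseUnitary (hHerm : ∀ n, (P n).IsHermitian) (θ : ℝ) :
    (phaseUnitary S P θ)ᴴ = phaseUnitary S P (-θ) := by
  simp only [phaseUnitary, conjTranspose_sum, conjTranspose_smul, (hHerm _).eq]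
  simp [← Complex.exp_conj]

theorem conjTranspose_phaseUnitary_mul_self (hHerm : ∀ n, (P n).IsHermitian)
    (hP : OrthogonalIdempotents P) (hsum : ∑ n ∈ S, P n = 1) (θ : ℝ) :
    (phaseUnitary S P θ)ᴴ * phaseUnitary S P θ = 1 := by
  rw [conjTranspose_phaseUnitary hHerm, phaseUnitary, phaseUnitary,
    sum_smul_mul_sum_smul_of_orthogonalIdempotents hP]
  simp [← Complex.exp_add, hsum]

theorem commute_phaseUnitary {A : Matrix (Fin d) (Fin d) ℂ} (hA : ∀ n ∈ S, Commute (P n) A)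
    (θ : ℝ) : Commute (phaseUnitary S P θ) A :=
  Commute.sum_left _ _ _ fun n hn => (hA n hn).smul_left _

theorem commute_phaseUnitary_vecMulVec_star (hHerm : ∀ n, (P n).IsHermitian)
    (hP : OrthogonalIdempotents P) (hsum : ∑ n ∈ S, P n = 1) {v : Fin d → ℂ} {μ : ℂ}
    (hv : (∑ n ∈ S, (n : ℂ) • P n) *ᵥ v = μ • v) (θ : ℝ) :
    Commute (phaseUnitary S P θ) (vecMulVec v (star v)) := by
  refine commute_phaseUnitary (fun n hn => ?_) θ
  rcases mulVec_eq_zero_or_eq_self_of_sum_smul_mulVec_eq_smul hP hsum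
    Int.cast_injective.injOn hv hn with hzero | hself
  · exact commute_vecMulVec_star (hHerm n) (.zero ℂ) (by rw [hzero, zero_smul])
  · exact commute_vecMulVec_star (hHerm n) (.one ℂ) (by rw [hself, one_smul])

end PhaseUnitary

/-- **Localisation Lemma.** For a covariant phase POM `F` for a number operator `N` on `ℂ^d`:
every unit eigenvector of `N` has uniform phase distribution `λ(X)/(2π)`, hence
`tr F(X) = d·λ(X)/(2π)`, and consequently `tr(ρ F(X)) ≤ d·λ(X)/(2π)` for every state `ρ`. -/
theorem localisation_lemma {d : ℕ}
    (S : Finset ℤ) (P : ℤ → Matrix (Fin d) (Fin d) ℂ)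
    (hHerm : ∀ n, (P n).IsHermitian)
    (hIdem : ∀ n, P n * P n = P n)
    (hOrth : ∀ n m, n ≠ m → P n * P m = 0)
    (hSupp : ∀ n, n ∉ S → P n = 0)
    (hSum : ∑ n ∈ S, P n = 1)
    (N : Matrix (Fin d) (Fin d) ℂ)
    (hN : N = ∑ n ∈ S, (n : ℂ) • P n)
    (F : Set (AddCircle (2 * Real.pi)) → Matrix (Fin d) (Fin d) ℂ)
    (hFpos : ∀ X, MeasurableSet X → (F X).PosSemidef)
    (hFuniv : F Set.univ = 1)
    (hFadd : ∀ g : ℕ → Set (AddCircle (2 * Real.pi)),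
      (∀ k, MeasurableSet (g k)) → Pairwise (Function.onFun Disjoint g) →
      ∀ i j, HasSum (fun k => F (g k) i j) (F (⋃ k, g k) i j))
    (hFcov : ∀ (θ : ℝ) (X : Set (AddCircle (2 * Real.pi))), MeasurableSet X →
      phaseUnitary S P θ * F X * (phaseUnitary S P θ)ᴴ
        = F ((· + ((θ : ℝ) : AddCircle (2 * Real.pi))) '' X)) :
    (∀ v : Fin d → ℂ, star v ⬝ᵥ v = 1 → (∃ μ : ℂ, N.mulVec v = μ • v) →
      ∀ X : Set (AddCircle (2 * Real.pi)), MeasurableSet X →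
        star v ⬝ᵥ (F X).mulVec v = (((volume X).toReal / (2 * Real.pi) : ℝ) : ℂ)) ∧
    (∀ X : Set (AddCircle (2 * Real.pi)), MeasurableSet X →
      (F X).trace = (((d : ℝ) * (volume X).toReal / (2 * Real.pi) : ℝ) : ℂ)) ∧
    (∀ ρ : Matrix (Fin d) (Fin d) ℂ, ρ.PosSemidef → ρ.trace = 1 →
      ∀ X : Set (AddCircle (2 * Real.pi)), MeasurableSet X →
        ((ρ * F X).trace).re ≤ (d : ℝ) * (volume X).toReal / (2 * Real.pi)) := by
  subst hN
  have hP : OrthogonalIdempotents P := ⟨hIdem, fun n m => hOrth n m⟩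
  have hF : IsPOM F := ⟨hFpos, hFuniv, fun g hg hdisj =>
    Pi.hasSum.2 fun i => Pi.hasSum.2 (hFadd g hg hdisj i)⟩
  have hU := conjTranspose_phaseUnitary_mul_self hHerm hP hSum
  have htrace : ∀ X : Set (AddCircle (2 * Real.pi)), MeasurableSet X →
      (F X).trace = (((d : ℝ) * (volume X).toReal / (2 * Real.pi) : ℝ) : ℂ) := fun X hX => by
    simpa [mul_div_assoc, measureReal_def] using
      hF.trace_mul_apply_of_commute hU hFcov .one (fun _ => .one_right _) hX
  refine ⟨?_, htrace, ?_⟩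
  · rintro v hunit ⟨μ, hv⟩ X hX
    have huniform := hF.trace_mul_apply_of_commute hU hFcov (posSemidef_vecMulVec_self_star v)
      (commute_phaseUnitary_vecMulVec_star hHerm hP hSum hv) hX
    rwa [trace_vecMulVec_mul, trace_vecMulVec, dotProduct_comm v, hunit, one_mul] at huniform
  · intro ρ hρ hρ1 X hX
    have hle := trace_mul_le_of_posSemidef hρ (hFpos X hX)
    rw [hρ1, one_mul, htrace X hX] at hle
    exact (Complex.le_def.1 hle).1

end
end

section
/- Invariance of relativised quantities: For every d_S×d_S matrix A and every h ∈ G, (U_S(h) ⊗ U_R(h)) ¥(A) (U_S(h) ⊗ U_R(h))* = ¥(A). Moreover, if A is invariant under the representation U_S, i.e. U_S(h) A U_S(h)* = A for all h ∈ G, then ¥(A) = A ⊗ 1. -/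
open Matrix MeasureTheory
open scoped Kronecker ComplexOrder

noncomputable section

/-- The relativisation map
`¥(A) = ∫_G (U_S(g) A U_S(g)*) ⊗ (U_R(g) T U_R(g)*) dμ(g)`, defined entrywise. -/
def yen {G : Type*} [MeasurableSpace G] {dS dR : ℕ} (μ : Measure G)
    (US : G → Matrix (Fin dS) (Fin dS) ℂ) (UR : G → Matrix (Fin dR) (Fin dR) ℂ)
    (T : Matrix (Fin dR) (Fin dR) ℂ) (A : Matrix (Fin dS) (Fin dS) ℂ) :
    Matrix (Fin dS × Fin dR) (Fin dS × Fin dR) ℂ :=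
  Matrix.of fun p q =>
    ∫ g, ((US g * A * (US g)ᴴ) ⊗ₖ (UR g * T * (UR g)ᴴ)) p q ∂μ

/-!
The integrand of `¥(A)` is the conjugate of `A ⊗ T` by `W(g) = U_S(g) ⊗ U_R(g)`, so `¥(A)` is the
twirl `∫ W(g) (A ⊗ T) W(g)* dμ(g)`. Conjugating a twirl by `W(h)` replaces `g` by `h g` in the
integrand, which left invariance of `μ` undoes. When `A` is fixed by `U_S`, the first tensor factor
of the integrand is constant, and what remains is `A` tensored with the twirl of `T`.
-/

section MatrixIntegral

variable {X l m n 𝕜 : Type*} [MeasurableSpace X] {μ : Measure X} [Fintype m] [RCLike 𝕜]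

lemma integral_const_matrix_mul_apply {F : X → Matrix m n 𝕜}
    (hF : ∀ i j, Integrable (fun x => F x i j) μ) (L : Matrix l m 𝕜) (i : l) (j : n) :
    ∫ x, (L * F x) i j ∂μ = (L * Matrix.of fun k j => ∫ x, F x k j ∂μ) i j := by
  simp only [Matrix.mul_apply, Matrix.of_apply]
  rw [integral_finsetSum _ fun k _ => (hF k j).const_mul (L i k)]
  simp only [integral_const_mul]

lemma integral_matrix_mul_const_apply {F : X → Matrix l m 𝕜}
    (hF : ∀ i j, Integrable (fun x => F x i j) μ) (R : Matrix m n 𝕜) (i : l) (j : n) :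
    ∫ x, (F x * R) i j ∂μ = ((Matrix.of fun i k => ∫ x, F x i k ∂μ) * R) i j := by
  simp only [Matrix.mul_apply, Matrix.of_apply]
  rw [integral_finsetSum _ fun k _ => (hF i k).mul_const (R k j)]
  simp only [integral_mul_const]

lemma integrable_const_matrix_mul_apply {F : X → Matrix m n 𝕜}
    (hF : ∀ i j, Integrable (fun x => F x i j) μ) (L : Matrix l m 𝕜) (i : l) (j : n) :
    Integrable (fun x => (L * F x) i j) μ := by
  simp only [Matrix.mul_apply]
  exact integrable_finsetSum _ fun k _ => (hF k j).const_mul (L i k)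

end MatrixIntegral

lemma conj_kronecker_conj {m m' n n' α : Type*} [Fintype n] [Fintype n'] [CommSemiring α]
    [StarRing α] (U : Matrix m n α) (V : Matrix m' n' α) (A : Matrix n n α) (B : Matrix n' n' α) :
    (U * A * Uᴴ) ⊗ₖ (V * B * Vᴴ) = (U ⊗ₖ V) * (A ⊗ₖ B) * (U ⊗ₖ V)ᴴ := by
  simp only [conjTranspose_kronecker, mul_kronecker_mul]

/-- The twirl `∫ U(g) B U(g)* dμ(g)` of a matrix `B` over a matrix-valued map `U`, integrated
entrywise in the same way as `yen`. -/
def twirl {G m n 𝕜 : Type*} [MeasurableSpace G] [Fintype n] [RCLike 𝕜] (μ : Measure G)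
    (U : G → Matrix m n 𝕜) (B : Matrix n n 𝕜) : Matrix m m 𝕜 :=
  Matrix.of fun i j => ∫ g, (U g * B * (U g)ᴴ) i j ∂μ

section Twirl

variable {G n 𝕜 : Type*} [MeasurableSpace G] {μ : Measure G} [Fintype n] [RCLike 𝕜]

lemma conj_twirl_eq_self [Group G] [MeasurableMul G] [μ.IsMulLeftInvariant]
    {U : G → Matrix n n 𝕜} (hU : ∀ g h, U (g * h) = U g * U h) {B : Matrix n n 𝕜}
    (hint : ∀ i j, Integrable (fun g => (U g * B * (U g)ᴴ) i j) μ) (h : G) :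
    U h * twirl μ U B * (U h)ᴴ = twirl μ U B := by
  have translate (g : G) :
      U h * (U g * B * (U g)ᴴ) * (U h)ᴴ = U (h * g) * B * (U (h * g))ᴴ := by
    simp only [hU, conjTranspose_mul, Matrix.mul_assoc]
  ext i j
  calc (U h * twirl μ U B * (U h)ᴴ) i j
      = ∫ g, (U h * (U g * B * (U g)ᴴ) * (U h)ᴴ) i j ∂μ := by
        rw [integral_matrix_mul_const_apply (integrable_const_matrix_mul_apply hint (U h))]
        simp only [integral_const_matrix_mul_apply hint]
        rfl
    _ = ∫ g, (U (h * g) * B * (U (h * g))ᴴ) i j ∂μ := by simp only [translate]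
    _ = twirl μ U B i j := integral_mul_left_eq_self (fun g => (U g * B * (U g)ᴴ) i j) h

lemma integrable_conj_apply_of_continuous {m : Type*} [TopologicalSpace G] [CompactSpace G]
    [OpensMeasurableSpace G] [IsFiniteMeasureOnCompacts μ] {U : G → Matrix m n 𝕜}
    (hU : Continuous U) (B : Matrix n n 𝕜) (i j : m) :
    Integrable (fun g => (U g * B * (U g)ᴴ) i j) μ :=
  (((hU.matrix_mul continuous_const).matrix_mul hU.matrix_conjTranspose).matrix_elem i j)
    |>.integrable_of_hasCompactSupport (.of_compactSpace _)

end Twirl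

lemma continuous_kronecker {X l m n p α : Type*} [TopologicalSpace X] [TopologicalSpace α] [Mul α]
    [ContinuousMul α] {U : X → Matrix l m α} {V : X → Matrix n p α}
    (hU : Continuous U) (hV : Continuous V) : Continuous fun x => U x ⊗ₖ V x :=
  continuous_matrix fun i j => (hU.matrix_elem i.1 j.1).mul (hV.matrix_elem i.2 j.2)

section Yen

variable {G : Type*} [MeasurableSpace G] (μ : Measure G) {dS dR : ℕ}
  (US : G → Matrix (Fin dS) (Fin dS) ℂ) (UR : G → Matrix (Fin dR) (Fin dR) ℂ)
  (T : Matrix (Fin dR) (Fin dR) ℂ)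

lemma yen_eq_twirl_kronecker (A : Matrix (Fin dS) (Fin dS) ℂ) :
    yen μ US UR T A = twirl μ (fun g => US g ⊗ₖ UR g) (A ⊗ₖ T) := by
  simp only [yen, twirl, conj_kronecker_conj]

variable {US} in
lemma yen_eq_kronecker_twirl {A : Matrix (Fin dS) (Fin dS) ℂ}
    (hA : ∀ g, US g * A * (US g)ᴴ = A) : yen μ US UR T A = A ⊗ₖ twirl μ UR T := by
  ext p q
  simp only [yen, twirl, hA, kroneckerMap_apply, Matrix.of_apply, integral_const_mul]

variable {US UR T} in
theorem yen_invariance_general [Group G] [MeasurableMul G] [μ.IsMulLeftInvariant]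
    (hUS : ∀ g h, US (g * h) = US g * US h) (hUR : ∀ g h, UR (g * h) = UR g * UR h)
    (hint : ∀ (A : Matrix (Fin dS) (Fin dS) ℂ) p q,
      Integrable (fun g => ((US g ⊗ₖ UR g) * (A ⊗ₖ T) * (US g ⊗ₖ UR g)ᴴ) p q) μ)
    (hT : twirl μ UR T = 1) :
    (∀ (A : Matrix (Fin dS) (Fin dS) ℂ) (h : G),
      (US h ⊗ₖ UR h) * yen μ US UR T A * (US h ⊗ₖ UR h)ᴴ = yen μ US UR T A) ∧
    (∀ A : Matrix (Fin dS) (Fin dS) ℂ, (∀ h : G, US h * A * (US h)ᴴ = A) →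
      yen μ US UR T A = A ⊗ₖ (1 : Matrix (Fin dR) (Fin dR) ℂ)) := by
  have kronecker_mul (g h : G) : US (g * h) ⊗ₖ UR (g * h) = (US g ⊗ₖ UR g) * (US h ⊗ₖ UR h) := by
    rw [hUS, hUR, mul_kronecker_mul]
  refine ⟨fun A h => ?_, fun A hA => ?_⟩
  · rw [yen_eq_twirl_kronecker]
    exact conj_twirl_eq_self (U := fun g => US g ⊗ₖ UR g) kronecker_mul (hint A) h
  · rw [yen_eq_kronecker_twirl μ UR T hA, hT]

end Yen

/-- **Invariance of relativised quantities**: `¥(A)` is invariant under `U_S ⊗ U_R`, and if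
`A` is invariant under `U_S` then `¥(A) = A ⊗ 1`. -/
theorem yen_invariance {G : Type*} [Group G] [TopologicalSpace G] [IsTopologicalGroup G]
    [CompactSpace G] [MeasurableSpace G] [BorelSpace G]
    (μ : Measure G) [μ.IsHaarMeasure]
    {dS dR : ℕ}
    (US : G → Matrix (Fin dS) (Fin dS) ℂ)
    (hUSunit : ∀ g, US g ∈ Matrix.unitaryGroup (Fin dS) ℂ)
    (hUShom : ∀ g h, US (g * h) = US g * US h) (hUSone : US 1 = 1)
    (hUScont : Continuous US)
    (UR : G → Matrix (Fin dR) (Fin dR) ℂ)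
    (hURunit : ∀ g, UR g ∈ Matrix.unitaryGroup (Fin dR) ℂ)
    (hURhom : ∀ g h, UR (g * h) = UR g * UR h) (hURone : UR 1 = 1)
    (hURcont : Continuous UR)
    (T : Matrix (Fin dR) (Fin dR) ℂ) (hT : T.PosSemidef)
    (hTnorm : ∀ i j, (∫ g, (UR g * T * (UR g)ᴴ) i j ∂μ)
      = (1 : Matrix (Fin dR) (Fin dR) ℂ) i j) :
    (∀ (A : Matrix (Fin dS) (Fin dS) ℂ) (h : G),
      (US h ⊗ₖ UR h) * yen μ US UR T A * (US h ⊗ₖ UR h)ᴴ = yen μ US UR T A) ∧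
    (∀ A : Matrix (Fin dS) (Fin dS) ℂ, (∀ h : G, US h * A * (US h)ᴴ = A) →
      yen μ US UR T A = A ⊗ₖ (1 : Matrix (Fin dR) (Fin dR) ℂ)) := by
  exact yen_invariance_general μ hUShom hURhom
    (fun A => integrable_conj_apply_of_continuous (continuous_kronecker hUScont hURcont) (A ⊗ₖ T))
    (Matrix.ext hTnorm)

end
end

section
/- Multiplicativity of the relativisation map for projection-valued reference: When the covariant reference POM is projection valued, ¥ is multiplicative: ¥(AB) = ¥(A)·¥(B) for all d_S×d_S matrices A, B; together with linearity, unitality and adjoint-preservation this makes ¥ a unital *-homomorphism. -/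
open Matrix
open scoped Kronecker ComplexOrder

noncomputable section

/-- The relativisation map for a finite group with projection-valued reference:
`¥(A) = ∑_{g ∈ G} (U_S(g) A U_S(g)*) ⊗ P_g`. -/
def yenFin {G : Type*} [Fintype G] {dS dR : ℕ}
    (US : G → Matrix (Fin dS) (Fin dS) ℂ) (P : G → Matrix (Fin dR) (Fin dR) ℂ)
    (A : Matrix (Fin dS) (Fin dS) ℂ) :
    Matrix (Fin dS × Fin dR) (Fin dS × Fin dR) ℂ :=
  ∑ g : G, (US g * A * (US g)ᴴ) ⊗ₖ P g

section KroneckerSum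

variable {ι l n p q R : Type*}

theorem kronecker_sum [NonUnitalNonAssocSemiring R] (s : Finset ι) (A : Matrix l n R)
    (B : ι → Matrix p q R) : A ⊗ₖ (∑ i ∈ s, B i) = ∑ i ∈ s, A ⊗ₖ B i := by
  ext
  simp only [kroneckerMap_apply, Matrix.sum_apply, Finset.mul_sum]

theorem sum_kronecker_mul_sum_kronecker [Fintype ι] [Fintype n] [Fintype p] [DecidableEq p]
    [CommSemiring R] {P : ι → Matrix p p R} (hP : OrthogonalIdempotents P)
    (X : ι → Matrix l n R) (Y : ι → Matrix n q R) :
    (∑ i, X i ⊗ₖ P i) * (∑ i, Y i ⊗ₖ P i) = ∑ i, (X i * Y i) ⊗ₖ P i := by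
  rw [Matrix.sum_mul]
  refine Finset.sum_congr rfl fun i _ => ?_
  have off_diagonal : ∀ j ≠ i, X i ⊗ₖ P i * Y j ⊗ₖ P j = 0 := fun j hji => by
    rw [← mul_kronecker_mul, hP.ortho hji.symm, kronecker_zero]
  rw [Matrix.mul_sum, Fintype.sum_eq_single i off_diagonal, ← mul_kronecker_mul, (hP.idem i).eq]

end KroneckerSum

theorem conj_mul_of_conjTranspose_mul_self {k n R : Type*} [Fintype k] [Fintype n] [DecidableEq n]
    [Semiring R] [Star R] {V : Matrix k n R} (hV : Vᴴ * V = 1) (A B : Matrix n n R) :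
    V * (A * B) * Vᴴ = V * A * Vᴴ * (V * B * Vᴴ) :=
  calc V * (A * B) * Vᴴ = V * A * (1 : Matrix n n R) * B * Vᴴ := by
        simp only [Matrix.mul_one, Matrix.mul_assoc]
    _ = V * A * (Vᴴ * V) * B * Vᴴ := by rw [hV]
    _ = V * A * Vᴴ * (V * B * Vᴴ) := by simp only [Matrix.mul_assoc]

/-- The relativisation map of a family of matrices `V` along a reference observable `P`, both
indexed by an arbitrary finite type. The `V i` may be rectangular, so that isometries are allowed;
`yenFin` is definitionally the case of square complex matrices. -/
def relativise {ι k n m R : Type*} [Fintype ι] [Fintype n] [Semiring R] [Star R]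
    (V : ι → Matrix k n R) (P : ι → Matrix m m R) (A : Matrix n n R) : Matrix (k × m) (k × m) R :=
  ∑ i, (V i * A * (V i)ᴴ) ⊗ₖ P i

section Relativise

variable {ι k n m R : Type*} [Fintype ι] [Fintype n]

theorem relativise_add [Semiring R] [Star R] (V : ι → Matrix k n R) (P : ι → Matrix m m R)
    (A B : Matrix n n R) : relativise V P (A + B) = relativise V P A + relativise V P B := by
  simp only [relativise, Matrix.mul_add, Matrix.add_mul, add_kronecker, Finset.sum_add_distrib]

theorem relativise_smul [CommSemiring R] [Star R] (V : ι → Matrix k n R) (P : ι → Matrix m m R)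
    (c : R) (A : Matrix n n R) : relativise V P (c • A) = c • relativise V P A := by
  simp only [relativise, Matrix.mul_smul, Matrix.smul_mul, smul_kronecker, Finset.smul_sum]

theorem relativise_mul [Fintype k] [Fintype m] [DecidableEq m] [DecidableEq n] [CommSemiring R]
    [Star R] {V : ι → Matrix k n R} (hV : ∀ i, (V i)ᴴ * V i = 1)
    {P : ι → Matrix m m R} (hP : OrthogonalIdempotents P) (A B : Matrix n n R) :
    relativise V P (A * B) = relativise V P A * relativise V P B := by
  simp only [relativise, sum_kronecker_mul_sum_kronecker hP,
    conj_mul_of_conjTranspose_mul_self (hV _)]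

theorem relativise_one [DecidableEq k] [DecidableEq m] [DecidableEq n] [Semiring R] [Star R]
    {V : ι → Matrix k n R} (hV : ∀ i, V i * (V i)ᴴ = 1)
    {P : ι → Matrix m m R} (hP : ∑ i, P i = 1) : relativise V P 1 = 1 := by
  simp only [relativise, Matrix.mul_one, hV, ← kronecker_sum, hP, one_kronecker_one]

theorem relativise_conjTranspose [CommSemiring R] [StarRing R] (V : ι → Matrix k n R)
    {P : ι → Matrix m m R} (hP : ∀ i, (P i).IsHermitian) (A : Matrix n n R) :
    relativise V P Aᴴ = (relativise V P A)ᴴ := by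
  simp only [relativise, conjTranspose_sum, conjTranspose_kronecker, conjTranspose_mul,
    conjTranspose_conjTranspose, (hP _).eq, Matrix.mul_assoc]

theorem yenFin_mul_general [Fintype m] [DecidableEq m] [DecidableEq n] [CommSemiring R] [StarRing R]
    {U : ι → Matrix n n R} (hU : ∀ i, U i ∈ unitary (Matrix n n R))
    {P : ι → Matrix m m R} (hP : CompleteOrthogonalIdempotents P)
    (hPh : ∀ i, (P i).IsHermitian) :
    (∀ A B, relativise U P (A * B) = relativise U P A * relativise U P B) ∧
    (∀ A B, relativise U P (A + B) = relativise U P A + relativise U P B) ∧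
    (∀ (c : R) (A), relativise U P (c • A) = c • relativise U P A) ∧
    relativise U P 1 = 1 ∧
    (∀ A, relativise U P Aᴴ = (relativise U P A)ᴴ) :=
  ⟨relativise_mul (fun i => (hU i).1) hP.toOrthogonalIdempotents,
    relativise_add U P,
    relativise_smul U P,
    relativise_one (fun i => (hU i).2) hP.complete,
    relativise_conjTranspose U hPh⟩

end Relativise

/-- **Multiplicativity of the relativisation map for projection-valued reference**: when the
covariant reference POM is projection valued, `¥(AB) = ¥(A)·¥(B)`; together with linearity,
unitality and adjoint-preservation, `¥` is a unital *-homomorphism. -/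
theorem yenFin_mul {G : Type*} [Fintype G] [Group G] {dS dR : ℕ}
    (US : G → Matrix (Fin dS) (Fin dS) ℂ)
    (hUSunit : ∀ g, US g ∈ Matrix.unitaryGroup (Fin dS) ℂ)
    (hUShom : ∀ g h, US (g * h) = US g * US h) (hUSone : US 1 = 1)
    (P : G → Matrix (Fin dR) (Fin dR) ℂ)
    (hPh : ∀ g, (P g).IsHermitian)
    (hPi : ∀ g, P g * P g = P g)
    (hPo : ∀ g h, g ≠ h → P g * P h = 0)
    (hPs : ∑ g : G, P g = 1) :
    (∀ A B : Matrix (Fin dS) (Fin dS) ℂ,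
      yenFin US P (A * B) = yenFin US P A * yenFin US P B) ∧
    (∀ A B : Matrix (Fin dS) (Fin dS) ℂ,
      yenFin US P (A + B) = yenFin US P A + yenFin US P B) ∧
    (∀ (c : ℂ) (A : Matrix (Fin dS) (Fin dS) ℂ),
      yenFin US P (c • A) = c • yenFin US P A) ∧
    (yenFin US P 1 = 1) ∧
    (∀ A : Matrix (Fin dS) (Fin dS) ℂ, yenFin US P Aᴴ = (yenFin US P A)ᴴ) :=
  yenFin_mul_general hUSunit ⟨⟨hPi, fun g h => hPo g h⟩, hPs⟩ hPh

end
end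

section
/- Exact recovery of absolute quantities for finite groups: Let e be the identity element of the finite group G and let φ ∈ ℂ^{d_R} be a unit vector with P_e φ = φ (a reference state perfectly localised at the identity). Then for every d_S×d_S matrix A and every vector v ∈ ℂ^{d_S}, ⟨v ⊗ φ, ¥(A)(v ⊗ φ)⟩ = ⟨v, A v⟩; that is, all expectation values of A are exactly those of the relativised invariant quantity ¥(A) in the reference state φ. -/
open Matrix
open scoped Kronecker ComplexOrder

noncomputable section

/-- The tensor product of vectors: `(v ⊗ φ)(i,j) = v i · φ j`. -/
def vtens {dS dR : ℕ} (v : Fin dS → ℂ) (φ : Fin dR → ℂ) : Fin dS × Fin dR → ℂ :=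
  fun p => v p.1 * φ p.2

theorem vtens_zero {dS dR : ℕ} (v : Fin dS → ℂ) : vtens v (0 : Fin dR → ℂ) = 0 := by
  ext p
  exact mul_zero (v p.1)

theorem star_vtens_dotProduct_vtens {dS dR : ℕ} (v w : Fin dS → ℂ) (φ ψ : Fin dR → ℂ) :
    star (vtens v φ) ⬝ᵥ vtens w ψ = (star v ⬝ᵥ w) * (star φ ⬝ᵥ ψ) := by
  simp only [dotProduct, vtens, Pi.star_apply, star_mul', Fintype.sum_prod_type,
    Finset.sum_mul_sum, mul_mul_mul_comm]

theorem kronecker_mulVec_vtens {dS dR eS eR : ℕ} (B : Matrix (Fin eS) (Fin dS) ℂ)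
    (Q : Matrix (Fin eR) (Fin dR) ℂ) (v : Fin dS → ℂ) (φ : Fin dR → ℂ) :
    (B ⊗ₖ Q) *ᵥ vtens v φ = vtens (B *ᵥ v) (Q *ᵥ φ) := by
  ext p
  simp only [mulVec, dotProduct, vtens, kroneckerMap_apply, Fintype.sum_prod_type,
    Finset.sum_mul_sum, mul_mul_mul_comm]

theorem mulVec_eq_zero_of_mul_eq_zero {l m n R : Type*} [Fintype m] [Fintype n]
    [NonUnitalSemiring R] {Q : Matrix l m R} {P : Matrix m n R} (hQP : Q * P = 0)
    {φ : m → R} {ψ : n → R} (hφ : P *ᵥ ψ = φ) : Q *ᵥ φ = 0 := by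
  rw [← hφ, mulVec_mulVec, hQP, zero_mulVec]

section Relativisation

variable {ι : Type*} [Fintype ι] {dS dR : ℕ} (US : ι → Matrix (Fin dS) (Fin dS) ℂ)
  (P : ι → Matrix (Fin dR) (Fin dR) ℂ) (A : Matrix (Fin dS) (Fin dS) ℂ)

theorem yenFin_mulVec_vtens (v : Fin dS → ℂ) (φ : Fin dR → ℂ) :
    yenFin US P A *ᵥ vtens v φ = ∑ i, vtens ((US i * A * (US i)ᴴ) *ᵥ v) (P i *ᵥ φ) := by
  simp only [yenFin, sum_mulVec, kronecker_mulVec_vtens]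

variable {P} {i : ι} {φ : Fin dR → ℂ}

theorem yenFin_mulVec_vtens_of_localised (hP : ∀ j ≠ i, P j * P i = 0)
    (hφloc : P i *ᵥ φ = φ) (v : Fin dS → ℂ) :
    yenFin US P A *ᵥ vtens v φ = vtens ((US i * A * (US i)ᴴ) *ᵥ v) φ := by
  have hφ_other (j : ι) (hj : j ≠ i) : P j *ᵥ φ = 0 :=
    mulVec_eq_zero_of_mul_eq_zero (hP j hj) hφloc
  rw [yenFin_mulVec_vtens, Fintype.sum_eq_single i, hφloc]
  intro j hj
  rw [hφ_other j hj, vtens_zero]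

theorem yenFin_exact_recovery_general (hP : ∀ j ≠ i, P j * P i = 0)
    (hφunit : star φ ⬝ᵥ φ = 1) (hφloc : P i *ᵥ φ = φ) (v w : Fin dS → ℂ) :
    star (vtens v φ) ⬝ᵥ yenFin US P A *ᵥ vtens w φ =
      star v ⬝ᵥ (US i * A * (US i)ᴴ) *ᵥ w := by
  rw [yenFin_mulVec_vtens_of_localised US A hP hφloc, star_vtens_dotProduct_vtens, hφunit,
    mul_one]

end Relativisation

/-- **Exact recovery of absolute quantities for finite groups**: if the reference state `φ` is
perfectly localised at the identity (`P_e φ = φ`), then every expectation value of `A` equals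
that of the relativised `¥(A)` in `v ⊗ φ`. -/
theorem yenFin_exact_recovery {G : Type*} [Fintype G] [Group G] {dS dR : ℕ}
    (US : G → Matrix (Fin dS) (Fin dS) ℂ)
    (hUSunit : ∀ g, US g ∈ Matrix.unitaryGroup (Fin dS) ℂ)
    (hUShom : ∀ g h, US (g * h) = US g * US h) (hUSone : US 1 = 1)
    (P : G → Matrix (Fin dR) (Fin dR) ℂ)
    (hPh : ∀ g, (P g).IsHermitian)
    (hPi : ∀ g, P g * P g = P g)
    (hPo : ∀ g h, g ≠ h → P g * P h = 0)
    (hPs : ∑ g : G, P g = 1)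
    (φ : Fin dR → ℂ) (hφunit : star φ ⬝ᵥ φ = 1) (hφloc : (P 1).mulVec φ = φ) :
    ∀ (A : Matrix (Fin dS) (Fin dS) ℂ) (v : Fin dS → ℂ),
      star (vtens v φ) ⬝ᵥ (yenFin US P A).mulVec (vtens v φ) = star v ⬝ᵥ A.mulVec v := by
  intro A v
  simpa [hUSone] using yenFin_exact_recovery_general US A (hPo · 1) hφunit hφloc v v

end
end

section
/- Phase localisation of the canonical-phase localising states: Fix ε ∈ (0,1) and set δ_n = (n+1)^{(ε−1)/2}. Define p_n := (1/(2π(n+1))) ∫_{{θ ∈ [−π,π] : |θ| ≥ δ_n/2}} (1 − cos((n+1)θ))/(1 − cos θ) dθ. Then p_n ≤ (1/(n+1)) · 1/(1 − cos(δ_n/2)) for every n, and p_n → 0 as n → ∞. Consequently, the canonical phase distribution of the state φ_n = (n+1)^{−1/2} Σ_{j=0}^n |j⟩ concentrates on the shrinking intervals [−δ_n/2, δ_n/2] around 0 as n → ∞. -/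
open MeasureTheory Filter Real

noncomputable section

/-- The localisation width `δ_n = (n+1)^{(ε−1)/2}`. -/
def locWidth (ε : ℝ) (n : ℕ) : ℝ := ((n : ℝ) + 1) ^ ((ε - 1) / 2)

/-- `p_n`: the probability that the canonical phase of
`φ_n = (n+1)^{−1/2} ∑_{j=0}^n |j⟩` lies outside `[−δ_n/2, δ_n/2]`, written via the
canonical phase density `(1 − cos((n+1)θ))/(2π(n+1)(1 − cos θ))` on `[−π, π]`. -/
def pseq (ε : ℝ) (n : ℕ) : ℝ :=
  (1 / (2 * π * ((n : ℝ) + 1))) *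
    ∫ θ in {θ : ℝ | θ ∈ Set.Icc (-π) π ∧ locWidth ε n / 2 ≤ |θ|},
      (1 - Real.cos (((n : ℝ) + 1) * θ)) / (1 - Real.cos θ)

/-!
Off the window the kernel is at most `(1 - cos ((n + 1) θ)) / (1 - cos (δ / 2))`, because
`θ ↦ 1 - cos θ` increases with `|θ|` on `[-π, π]`. The numerator integrates to `2 π` over a full
period, so the mass off the window is at most `1 / ((n + 1) (1 - cos (δ / 2)))`. By Jordan's
inequality `1 - cos θ ≥ 2 θ² / π²` this mass is also at most `2 π² / ((n + 1) δ²)`, so it vanishes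
as soon as `n δ_n² → ∞`; for `δ_n = (n + 1) ^ ((ε - 1) / 2)` this quantity grows like `n ^ ε`.
-/

lemma setIntegral_mul_le_of_subset {α : Type*} [MeasurableSpace α] {μ : Measure α} {s t : Set α}
    {f g : α → ℝ} {C : ℝ} (hst : s ⊆ t) (hf : IntegrableOn f t μ) (hf0 : 0 ≤ f)
    (hg0 : ∀ x ∈ s, 0 ≤ g x) (hC : 0 ≤ C) (hgC : ∀ x ∈ s, g x ≤ C) :
    ∫ x in s, f x * g x ∂μ ≤ (∫ x in t, f x ∂μ) * C :=
  calc ∫ x in s, f x * g x ∂μ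
    _ ≤ ∫ x in s, f x * C ∂μ :=
        setIntegral_mono_of_nonneg (fun x hx ↦ mul_nonneg (hf0 x) (hg0 x hx))
          (fun x hx ↦ mul_le_mul_of_nonneg_left (hgC x hx) (hf0 x))
          ((hf.mono_set hst).mul_const C)
    _ = (∫ x in s, f x ∂μ) * C := integral_mul_const C f
    _ ≤ (∫ x in t, f x ∂μ) * C :=
        mul_le_mul_of_nonneg_right
          (setIntegral_mono_set hf (.of_forall hf0) hst.eventuallyLE) hC

lemma one_sub_cos_nonneg (x : ℝ) : 0 ≤ 1 - cos x :=
  sub_nonneg.2 (cos_le_one x)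

lemma inv_one_sub_cos_le_inv_one_sub_cos {a θ : ℝ} (ha : 0 < a) (haθ : a ≤ |θ|) (hθ : |θ| ≤ π) :
    (1 - cos θ)⁻¹ ≤ (1 - cos a)⁻¹ := by
  have cos_lt : cos a < 1 :=
    cos_zero ▸ cos_lt_cos_of_nonneg_of_le_pi le_rfl (haθ.trans hθ) ha
  have cos_le : cos θ ≤ cos a :=
    cos_abs θ ▸ cos_le_cos_of_nonneg_of_le_pi ha.le hθ haθ
  exact inv_anti₀ (sub_pos.2 cos_lt) (sub_le_sub_left cos_le 1)

lemma inv_one_sub_cos_le_inv_mul_sq {a θ : ℝ} (ha : 0 < a) (haθ : a ≤ |θ|) (hθ : |θ| ≤ π) :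
    (1 - cos θ)⁻¹ ≤ (2 / π ^ 2 * a ^ 2)⁻¹ := by
  refine inv_anti₀ (by positivity) ?_
  calc 2 / π ^ 2 * a ^ 2
    _ ≤ 2 / π ^ 2 * |θ| ^ 2 := by gcongr
    _ = 2 / π ^ 2 * θ ^ 2 := by rw [sq_abs]
    _ ≤ 1 - cos θ := by linarith [cos_le_one_sub_mul_cos_sq hθ]

lemma integral_one_sub_cos_nat_mul {k : ℕ} (hk : k ≠ 0) :
    ∫ θ in Set.Icc (-π) π, (1 - cos (k * θ)) = 2 * π := by
  have integral_cos_mul : ∫ θ in (-π)..π, cos (k * θ) = 0 := by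
    rw [intervalIntegral.integral_comp_mul_left cos (Nat.cast_ne_zero.2 hk), integral_cos,
      mul_neg, sin_neg, sin_nat_mul_pi, neg_zero, sub_zero, smul_zero]
  have cos_integrable : IntervalIntegrable (fun θ ↦ cos (k * θ)) volume (-π) π :=
    Continuous.intervalIntegrable (by fun_prop) _ _
  rw [integral_Icc_eq_integral_Ioc, ← intervalIntegral.integral_of_le (by linarith [pi_pos]),
    intervalIntegral.integral_sub intervalIntegrable_const cos_integrable, integral_cos_mul,
    intervalIntegral.integral_const, smul_eq_mul]
  ring

/-- The probability that the canonical phase of `φ_n` is at distance at least `a` from `0`, so that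
`pseq ε n` is `phaseTail n (locWidth ε n / 2)` by definition. -/
def phaseTail (n : ℕ) (a : ℝ) : ℝ :=
  (1 / (2 * π * ((n : ℝ) + 1))) *
    ∫ θ in {θ : ℝ | θ ∈ Set.Icc (-π) π ∧ a ≤ |θ|},
      (1 - cos (((n : ℝ) + 1) * θ)) / (1 - cos θ)

lemma phaseTail_nonneg (n : ℕ) (a : ℝ) : 0 ≤ phaseTail n a :=
  mul_nonneg (by positivity) <| integral_nonneg fun θ ↦
    div_nonneg (one_sub_cos_nonneg _) (one_sub_cos_nonneg θ)

lemma phaseTail_le_of_inv_one_sub_cos_le (n : ℕ) {a C : ℝ} (hC : 0 ≤ C)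
    (h : ∀ θ, a ≤ |θ| → |θ| ≤ π → (1 - cos θ)⁻¹ ≤ C) :
    phaseTail n a ≤ 1 / ((n : ℝ) + 1) * C := by
  have integral_num : ∫ θ in Set.Icc (-π) π, (1 - cos (((n : ℝ) + 1) * θ)) = 2 * π := by
    exact_mod_cast integral_one_sub_cos_nat_mul n.succ_ne_zero
  have num_integrable :
      IntegrableOn (fun θ ↦ 1 - cos (((n : ℝ) + 1) * θ)) (Set.Icc (-π) π) :=
    Continuous.integrableOn_Icc (by fun_prop)
  calc phaseTail n a
    _ ≤ 1 / (2 * π * ((n : ℝ) + 1)) * (2 * π * C) := by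
        simp only [phaseTail, div_eq_mul_inv (1 - cos _)]
        gcongr
        rw [← integral_num]
        exact setIntegral_mul_le_of_subset (fun θ hθ ↦ hθ.1) num_integrable
          (fun θ ↦ one_sub_cos_nonneg _) (fun θ _ ↦ inv_nonneg.2 (one_sub_cos_nonneg θ)) hC
          (fun θ hθ ↦ h θ hθ.2 (abs_le.2 hθ.1))
    _ = 1 / ((n : ℝ) + 1) * C := by field_simp

lemma phaseTail_le_inv_one_sub_cos (n : ℕ) {a : ℝ} (ha : 0 < a) :
    phaseTail n a ≤ 1 / ((n : ℝ) + 1) * (1 / (1 - cos a)) := by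
  rw [one_div (1 - cos a)]
  exact phaseTail_le_of_inv_one_sub_cos_le n (inv_nonneg.2 (one_sub_cos_nonneg a))
    fun _ ↦ inv_one_sub_cos_le_inv_one_sub_cos ha

lemma phaseTail_le_div_mul_sq (n : ℕ) {a : ℝ} (ha : 0 < a) :
    phaseTail n a ≤ π ^ 2 / 2 / (((n : ℝ) + 1) * a ^ 2) :=
  calc phaseTail n a
    _ ≤ 1 / ((n : ℝ) + 1) * (2 / π ^ 2 * a ^ 2)⁻¹ :=
        phaseTail_le_of_inv_one_sub_cos_le n (by positivity)
          fun _ ↦ inv_one_sub_cos_le_inv_mul_sq ha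
    _ = π ^ 2 / 2 / (((n : ℝ) + 1) * a ^ 2) := by field_simp

lemma tendsto_phaseTail {a : ℕ → ℝ} (ha : ∀ n, 0 < a n)
    (hlim : Tendsto (fun n : ℕ ↦ ((n : ℝ) + 1) * a n ^ 2) atTop atTop) :
    Tendsto (fun n ↦ phaseTail n (a n)) atTop (nhds 0) :=
  squeeze_zero (fun n ↦ phaseTail_nonneg n (a n)) (fun n ↦ phaseTail_le_div_mul_sq n (ha n))
    (hlim.const_div_atTop _)

lemma locWidth_pos (ε : ℝ) (n : ℕ) : 0 < locWidth ε n :=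
  rpow_pos_of_pos n.cast_add_one_pos _

lemma mul_locWidth_sq (ε : ℝ) (n : ℕ) :
    ((n : ℝ) + 1) * locWidth ε n ^ 2 = ((n : ℝ) + 1) ^ ε := by
  have base_pos : (0 : ℝ) < n + 1 := n.cast_add_one_pos
  rw [locWidth, ← rpow_mul_natCast base_pos.le, Nat.cast_ofNat, div_mul_cancel₀ _ two_ne_zero,
    rpow_sub_one base_pos.ne', mul_div_cancel₀ _ base_pos.ne']

lemma tendsto_mul_locWidth_sq {ε : ℝ} (hε : 0 < ε) :
    Tendsto (fun n : ℕ ↦ ((n : ℝ) + 1) * locWidth ε n ^ 2) atTop atTop := by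
  simp only [mul_locWidth_sq]
  exact (tendsto_rpow_atTop hε).comp
    (tendsto_atTop_add_const_right _ 1 tendsto_natCast_atTop_atTop)

theorem canonical_phase_localisation_general {δ : ℕ → ℝ} (hδ : ∀ n, 0 < δ n)
    (hlim : Tendsto (fun n : ℕ ↦ ((n : ℝ) + 1) * δ n ^ 2) atTop atTop) :
    (∀ n : ℕ, phaseTail n (δ n / 2) ≤ (1 / ((n : ℝ) + 1)) * (1 / (1 - cos (δ n / 2)))) ∧
    Tendsto (fun n ↦ phaseTail n (δ n / 2)) atTop (nhds 0) := by
  have halfWidth_pos : ∀ n, 0 < δ n / 2 := fun n ↦ half_pos (hδ n)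
  refine ⟨fun n ↦ phaseTail_le_inv_one_sub_cos n (halfWidth_pos n),
    tendsto_phaseTail halfWidth_pos ?_⟩
  simpa only [div_pow, mul_div_assoc] using hlim.atTop_div_const (by norm_num : (0 : ℝ) < 2 ^ 2)

/-- **Phase localisation of the canonical-phase localising states**: for `ε ∈ (0,1)` and
`δ_n = (n+1)^{(ε−1)/2}`, one has `p_n ≤ (1/(n+1))·1/(1 − cos(δ_n/2))` for every `n`, and
`p_n → 0`; hence the canonical phase distribution of `φ_n` concentrates on the shrinking
intervals `[−δ_n/2, δ_n/2]`. -/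
theorem canonical_phase_localisation (ε : ℝ) (hε0 : 0 < ε) (hε1 : ε < 1) :
    (∀ n : ℕ, pseq ε n ≤ (1 / ((n : ℝ) + 1)) * (1 / (1 - Real.cos (locWidth ε n / 2)))) ∧
    Tendsto (pseq ε) atTop (nhds 0) := by
  exact canonical_phase_localisation_general (locWidth_pos ε) (tendsto_mul_locWidth_sq hε0)

end
end

section
/- Commutator–localisation trade-off: Let N_S, N_R be Hermitian matrices (number operators) on ℂ^{d_S}, ℂ^{d_R}, let ω be a state on ℂ^{d_R}, let E be an effect on ℂ^{d_S}⊗ℂ^{d_R} commuting with N_S ⊗ 1 + 1 ⊗ N_R, and let A be an effect on ℂ^{d_S}. Then ‖[A, N_S]‖ ≤ 2·D(Γ_ω(E), A)·‖N_S‖ + 2·Δ_ω(N_R)·(2·D(Γ_ω(E), A) + V(A))^{1/2}, where D(X,Y) = ‖X − Y‖ is the operator-norm distance, V(A) = ‖A − A²‖, and Δ_ω(N_R) = (tr(ω N_R²) − tr(ω N_R)²)^{1/2}. -/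
open Matrix
open scoped Kronecker ComplexOrder

noncomputable section

/-- An effect: a matrix `E` with `0 ≤ E ≤ 1` in the Loewner order. -/
def IsEffect {n : Type*} [Fintype n] [DecidableEq n] (E : Matrix n n ℂ) : Prop :=
  E.PosSemidef ∧ (1 - E).PosSemidef

/-- The (ℓ²-)operator norm of a matrix. -/
def opNorm {d : ℕ} (M : Matrix (Fin d) (Fin d) ℂ) : ℝ :=
  ‖Matrix.toEuclideanCLM (𝕜 := ℂ) M‖

/-- The restriction map `Γ_ω`, the linear map determined by `Γ_ω(A ⊗ B) = tr(ωB)·A`,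
i.e. satisfying `tr(ρ Γ_ω(T)) = tr((ρ ⊗ ω) T)` for all `ρ`. -/
def restrictMap {dS dR : ℕ} (ω : Matrix (Fin dR) (Fin dR) ℂ)
    (T : Matrix (Fin dS × Fin dR) (Fin dS × Fin dR) ℂ) : Matrix (Fin dS) (Fin dS) ℂ :=
  Matrix.of fun i j => ∑ k, ∑ l, ω k l * T (i, l) (j, k)

/-!
The restriction map has a Stinespring form `Γ_ω(T) = V* (T ⊗ 1) V`, with `V` the isometry that
adjoins a purification of `ω`. Hence the operator-valued covariance
`Γ_ω(X* Y) - Γ_ω(X*) Γ_ω(Y)` is the Gram matrix of the residuals `(1 - V V*) (X ⊗ 1) V`, and it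
obeys a Cauchy–Schwarz inequality. Conservation turns `[Γ_ω(E), N_S]` into `Γ_ω([1 ⊗ N_R, E])`, and
since `Γ_ω(1 ⊗ N_R)` is a scalar, this is a difference of two covariances of `E` and `1 ⊗ N_R`. The
covariance of `1 ⊗ N_R` with itself is `Δ_ω(N_R)²`, and that of `E` is at most
`Γ_ω(E) - Γ_ω(E)²` because `E² ≤ E`. Replacing `Γ_ω(E)` by `A` costs the terms in `D(Γ_ω(E), A)`.
-/

section NormedRing

theorem norm_commutator_le {R : Type*} [NonUnitalSeminormedRing R] (a b : R) :
    ‖a * b - b * a‖ ≤ 2 * ‖a‖ * ‖b‖ :=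
  calc ‖a * b - b * a‖ ≤ ‖a * b‖ + ‖b * a‖ := norm_sub_le _ _
    _ ≤ ‖a‖ * ‖b‖ + ‖b‖ * ‖a‖ := add_le_add (norm_mul_le _ _) (norm_mul_le _ _)
    _ = 2 * ‖a‖ * ‖b‖ := by ring

theorem norm_commutator_le_add {R : Type*} [NonUnitalSeminormedRing R] (a b n : R) :
    ‖a * n - n * a‖ ≤ 2 * ‖b - a‖ * ‖n‖ + ‖b * n - n * b‖ := by
  have hdecomp : a * n - n * a = (b * n - n * b) - ((b - a) * n - n * (b - a)) := by
    noncomm_ring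
  calc ‖a * n - n * a‖ ≤ ‖b * n - n * b‖ + ‖(b - a) * n - n * (b - a)‖ :=
        hdecomp ▸ norm_sub_le _ _
    _ ≤ ‖b * n - n * b‖ + 2 * ‖b - a‖ * ‖n‖ := by gcongr; exact norm_commutator_le _ _
    _ = 2 * ‖b - a‖ * ‖n‖ + ‖b * n - n * b‖ := add_comm _ _

theorem norm_sub_mul_self_le_add {R : Type*} [SeminormedRing R] {a b : R}
    (ha : ‖a‖ ≤ 1) (hb : ‖1 - b‖ ≤ 1) :
    ‖b - b * b‖ ≤ 2 * ‖b - a‖ + ‖a - a * a‖ := by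
  have hdecomp : b - b * b = (1 - b) * (b - a) - (b - a) * a + (a - a * a) := by noncomm_ring
  calc ‖b - b * b‖ ≤ ‖(1 - b) * (b - a)‖ + ‖(b - a) * a‖ + ‖a - a * a‖ :=
        hdecomp ▸ (norm_add_le _ _).trans (add_le_add_left (norm_sub_le _ _) _)
    _ ≤ ‖1 - b‖ * ‖b - a‖ + ‖b - a‖ * ‖a‖ + ‖a - a * a‖ := by
        gcongr <;> exact norm_mul_le _ _
    _ ≤ 1 * ‖b - a‖ + ‖b - a‖ * 1 + ‖a - a * a‖ := by gcongr
    _ = 2 * ‖b - a‖ + ‖a - a * a‖ := by ring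

end NormedRing

section Matrix

variable {𝕜 n : Type*} [RCLike 𝕜] [Fintype n]

theorem coe_re_trace_mul {A B : Matrix n n 𝕜} (hA : A.IsHermitian) (hB : B.IsHermitian) :
    (RCLike.re (A * B).trace : 𝕜) = (A * B).trace := by
  rw [← RCLike.conj_eq_iff_re, starRingEnd_apply, ← trace_conjTranspose, conjTranspose_mul, hA.eq,
    hB.eq, trace_mul_comm]

theorem exists_eq_mul_conjTranspose_self {A : Matrix n n 𝕜} (hA : A.PosSemidef) :
    ∃ W : Matrix n n 𝕜, A = W * Wᴴ := by
  classical
  open scoped MatrixOrder in exact CStarAlgebra.nonneg_iff_eq_mul_star_self.mp hA.nonneg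

end Matrix

section Compression

variable {𝕜 m n : Type*} [RCLike 𝕜] [Fintype m] [Fintype n]

/-- The part of `X V` orthogonal to the range of an isometry `V`, that is `(1 - V V*) X V`. It
measures the failure of the compression `X ↦ V* X V` to be multiplicative. -/
def compressionResidual (V : Matrix m n 𝕜) (X : Matrix m m 𝕜) : Matrix m n 𝕜 :=
  X * V - V * (Vᴴ * X * V)

theorem compressionResidual_conjTranspose_mul [DecidableEq n] {V : Matrix m n 𝕜} (hV : Vᴴ * V = 1)
    (X Y : Matrix m m 𝕜) :
    (compressionResidual V X)ᴴ * compressionResidual V Y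
      = Vᴴ * (Xᴴ * Y) * V - Vᴴ * Xᴴ * V * (Vᴴ * Y * V) := by
  have hcancel (Z : Matrix n n 𝕜) : Vᴴ * (V * Z) = Z := by
    rw [← Matrix.mul_assoc, hV, Matrix.one_mul]
  simp only [compressionResidual, conjTranspose_sub, conjTranspose_mul, conjTranspose_conjTranspose,
    Matrix.sub_mul, Matrix.mul_sub, Matrix.mul_assoc, hcancel]
  abel

end Compression

section RestrictMap

variable {dS dR : ℕ} (ω : Matrix (Fin dR) (Fin dR) ℂ)

theorem restrictMap_sub (T U : Matrix (Fin dS × Fin dR) (Fin dS × Fin dR) ℂ) :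
    restrictMap ω (T - U) = restrictMap ω T - restrictMap ω U := by
  ext i j
  simp [restrictMap, mul_sub, Finset.sum_sub_distrib]

theorem restrictMap_one_kronecker (M : Matrix (Fin dR) (Fin dR) ℂ) :
    restrictMap ω ((1 : Matrix (Fin dS) (Fin dS) ℂ) ⊗ₖ M) = (ω * M).trace • 1 := by
  ext i j
  simp only [restrictMap, of_apply, kroneckerMap_apply, trace, diag_apply, mul_apply,
    Matrix.smul_apply, smul_eq_mul, Finset.sum_mul, mul_assoc, mul_comm (M _ _)]

theorem restrictMap_mul_kronecker_one (T : Matrix (Fin dS × Fin dR) (Fin dS × Fin dR) ℂ)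
    (N : Matrix (Fin dS) (Fin dS) ℂ) :
    restrictMap ω (T * (N ⊗ₖ (1 : Matrix (Fin dR) (Fin dR) ℂ))) = restrictMap ω T * N := by
  ext i j
  simp only [restrictMap, mul_apply, of_apply, kroneckerMap_apply, Fintype.sum_prod_type,
    one_apply, mul_ite, mul_one, mul_zero, Finset.sum_ite_eq', Finset.mem_univ, if_true,
    Finset.mul_sum, Finset.sum_mul, mul_assoc]
  exact Finset.sum_comm_cycle

theorem restrictMap_kronecker_one_mul (N : Matrix (Fin dS) (Fin dS) ℂ)
    (T : Matrix (Fin dS × Fin dR) (Fin dS × Fin dR) ℂ) :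
    restrictMap ω ((N ⊗ₖ (1 : Matrix (Fin dR) (Fin dR) ℂ)) * T) = N * restrictMap ω T := by
  ext i j
  simp only [restrictMap, mul_apply, of_apply, kroneckerMap_apply, Fintype.sum_prod_type,
    one_apply, mul_ite, ite_mul, zero_mul, mul_one, mul_zero, Finset.sum_ite_eq, Finset.mem_univ,
    if_true, Finset.mul_sum, mul_left_comm (ω _ _)]
  exact Finset.sum_comm_cycle

variable {ω}

theorem restrictMap_one (hωtr : ω.trace = 1) :
    restrictMap ω (1 : Matrix (Fin dS × Fin dR) (Fin dS × Fin dR) ℂ) = 1 := by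
  rw [← one_kronecker_one, restrictMap_one_kronecker, Matrix.mul_one, hωtr, one_smul]

theorem restrictMap_commutator_of_conserved {NS : Matrix (Fin dS) (Fin dS) ℂ}
    {NR : Matrix (Fin dR) (Fin dR) ℂ} {E : Matrix (Fin dS × Fin dR) (Fin dS × Fin dR) ℂ}
    (hE : Commute (NS ⊗ₖ 1 + 1 ⊗ₖ NR) E) :
    restrictMap ω E * NS - NS * restrictMap ω E
      = restrictMap ω ((1 ⊗ₖ NR) * E - E * (1 ⊗ₖ NR)) := by
  have hswap : (1 ⊗ₖ NR) * E - E * (1 ⊗ₖ NR) = E * (NS ⊗ₖ 1) - (NS ⊗ₖ 1) * E := by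
    rw [sub_eq_sub_iff_add_eq_add, add_comm, ← Matrix.add_mul, hE.eq, Matrix.mul_add]
  rw [hswap, restrictMap_sub, restrictMap_mul_kronecker_one, restrictMap_kronecker_one_mul]

/-- The map `ψ ↦ ψ ⊗ Ω`, where `Ω` is the vector of `ℂ^{d_R} ⊗ ℂ^κ` whose coordinates are the
entries of `W`. It adjoins a purification of `ω = W W*`, and is an isometry when `tr ω = 1`. -/
def purifyingMap {κ : Type*} (dS : ℕ) (W : Matrix (Fin dR) κ ℂ) :
    Matrix ((Fin dS × Fin dR) × κ) (Fin dS) ℂ :=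
  of fun x j => if x.1.1 = j then W x.1.2 x.2 else 0

theorem restrictMap_mul_conjTranspose {κ : Type*} [Fintype κ] [DecidableEq κ]
    (W : Matrix (Fin dR) κ ℂ) (T : Matrix (Fin dS × Fin dR) (Fin dS × Fin dR) ℂ) :
    restrictMap (W * Wᴴ) T
      = (purifyingMap dS W)ᴴ * (T ⊗ₖ (1 : Matrix κ κ ℂ)) * purifyingMap dS W := by
  ext i j
  simp only [purifyingMap, restrictMap, mul_apply, one_apply, Fintype.sum_prod_type,
    Finset.sum_mul, conjTranspose_apply, of_apply, kroneckerMap_apply, apply_ite star, star_zero,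
    mul_ite, ite_mul, mul_one, mul_zero, zero_mul, Finset.sum_ite_eq', Finset.sum_ite_irrel,
    Finset.sum_const_zero, Finset.mem_univ, if_true]
  refine Finset.sum_congr rfl fun k _ => Finset.sum_comm.trans ?_
  exact Finset.sum_congr rfl fun a _ => Finset.sum_congr rfl fun l _ => by ring

theorem posSemidef_restrictMap (hω : ω.PosSemidef)
    {T : Matrix (Fin dS × Fin dR) (Fin dS × Fin dR) ℂ} (hT : T.PosSemidef) :
    (restrictMap ω T).PosSemidef := by
  obtain ⟨W, rfl⟩ := exists_eq_mul_conjTranspose_self hω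
  rw [restrictMap_mul_conjTranspose]
  exact (hT.kronecker PosSemidef.one).conjTranspose_mul_mul_same _

end RestrictMap

section Covariance

variable {dS dR : ℕ}

/-- The operator-valued covariance of `X` and `Y` under the restriction map. It is bilinear:
the positive sesquilinear form is `(X, Y) ↦ restrictCov ω Xᴴ Y`. -/
def restrictCov (ω : Matrix (Fin dR) (Fin dR) ℂ)
    (X Y : Matrix (Fin dS × Fin dR) (Fin dS × Fin dR) ℂ) : Matrix (Fin dS) (Fin dS) ℂ :=
  restrictMap ω (X * Y) - restrictMap ω X * restrictMap ω Y

variable {ω : Matrix (Fin dR) (Fin dR) ℂ}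

theorem exists_restrictCov_eq_conjTranspose_mul (dS : ℕ) (hω : ω.PosSemidef)
    (hωtr : ω.trace = 1) :
    ∃ R : Matrix (Fin dS × Fin dR) (Fin dS × Fin dR) ℂ →
        Matrix ((Fin dS × Fin dR) × Fin dR) (Fin dS) ℂ,
      ∀ X Y, restrictCov ω Xᴴ Y = (R X)ᴴ * R Y := by
  obtain ⟨W, rfl⟩ := exists_eq_mul_conjTranspose_self hω
  have hisometry : (purifyingMap dS W)ᴴ * purifyingMap dS W = 1 := by
    rw [← restrictMap_one hωtr, restrictMap_mul_conjTranspose, one_kronecker_one, Matrix.mul_one]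
  refine ⟨fun X => compressionResidual (purifyingMap dS W) (X ⊗ₖ 1), fun X Y => ?_⟩
  simp only [restrictCov, restrictMap_mul_conjTranspose,
    compressionResidual_conjTranspose_mul hisometry, conjTranspose_kronecker, conjTranspose_one,
    ← mul_kronecker_mul, Matrix.mul_one]

theorem posSemidef_restrictCov_conjTranspose_self (hω : ω.PosSemidef) (hωtr : ω.trace = 1)
    (X : Matrix (Fin dS × Fin dR) (Fin dS × Fin dR) ℂ) : (restrictCov ω Xᴴ X).PosSemidef := by
  obtain ⟨R, hR⟩ := exists_restrictCov_eq_conjTranspose_mul dS hω hωtr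
  exact hR X X ▸ posSemidef_conjTranspose_mul_self (R X)

theorem restrictMap_commutator_one_kronecker (N : Matrix (Fin dR) (Fin dR) ℂ)
    (T : Matrix (Fin dS × Fin dR) (Fin dS × Fin dR) ℂ) :
    restrictMap ω ((1 ⊗ₖ N) * T - T * (1 ⊗ₖ N))
      = restrictCov ω (1 ⊗ₖ N) T - restrictCov ω T (1 ⊗ₖ N) := by
  simp [restrictCov, restrictMap_sub, restrictMap_one_kronecker]

theorem restrictCov_one_kronecker_self (hω : ω.IsHermitian) {N : Matrix (Fin dR) (Fin dR) ℂ}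
    (hN : N.IsHermitian) :
    restrictCov ω ((1 : Matrix (Fin dS) (Fin dS) ℂ) ⊗ₖ N) (1 ⊗ₖ N)
      = (((ω * (N * N)).trace.re - (ω * N).trace.re ^ 2 : ℝ) : ℂ) • 1 := by
  have hNN : (N * N).IsHermitian := by simpa [hN.eq] using isHermitian_conjTranspose_mul_self N
  have hmean := coe_re_trace_mul hω hN
  have hsquare := coe_re_trace_mul hω hNN
  simp only [RCLike.re_eq_complex_re, RCLike.ofReal_eq_complex_ofReal] at hmean hsquare
  simp [restrictCov, ← mul_kronecker_mul, restrictMap_one_kronecker, hmean, hsquare, sub_smul, sq,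
    smul_smul]

end Covariance

namespace IsEffect

variable {n : Type*} [Fintype n] [DecidableEq n] {E : Matrix n n ℂ}

theorem one_sub (hE : IsEffect E) : IsEffect (1 - E) :=
  ⟨hE.2, by simpa using hE.1⟩

theorem posSemidef_sub_mul_self (hE : IsEffect E) : (E - E * E).PosSemidef := by
  have hdecomp : E - E * E = E * (1 - E) * E + (1 - E) * E * (1 - E) := by noncomm_ring
  have hleft := hE.2.conjTranspose_mul_mul_same E
  have hright := hE.1.conjTranspose_mul_mul_same (1 - E)
  rw [hE.1.isHermitian.eq] at hleft
  rw [hE.2.isHermitian.eq] at hright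
  exact hdecomp ▸ hleft.add hright

theorem restrictMap {dS dR : ℕ} {ω : Matrix (Fin dR) (Fin dR) ℂ}
    {E : Matrix (Fin dS × Fin dR) (Fin dS × Fin dR) ℂ} (hE : IsEffect E) (hω : ω.PosSemidef)
    (hωtr : ω.trace = 1) : IsEffect (restrictMap ω E) := by
  refine ⟨posSemidef_restrictMap hω hE.1, ?_⟩
  rw [← restrictMap_one hωtr, ← restrictMap_sub]
  exact posSemidef_restrictMap hω hE.2

end IsEffect

section OperatorNorm

open scoped Matrix.Norms.L2Operator MatrixOrder

theorem opNorm_eq_norm {d : ℕ} (M : Matrix (Fin d) (Fin d) ℂ) : opNorm M = ‖M‖ := rfl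

theorem IsEffect.norm_le_one {n : Type*} [Fintype n] [DecidableEq n] {E : Matrix n n ℂ}
    (hE : IsEffect E) : ‖E‖ ≤ 1 :=
  (CStarAlgebra.norm_le_one_iff_of_nonneg E hE.1.nonneg).2 (Matrix.le_iff.2 hE.2)

-- The square roots absorb the case of an empty index type, where `c` may be negative.
theorem sqrt_norm_smul_one_le_of_posSemidef {𝕜 n : Type*} [RCLike 𝕜] [Fintype n] [DecidableEq n]
    {c : ℝ} (hc : ((c : 𝕜) • (1 : Matrix n n 𝕜)).PosSemidef) :
    √‖(c : 𝕜) • (1 : Matrix n n 𝕜)‖ ≤ √c := by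
  rcases isEmpty_or_nonempty n with _ | hn
  · simp [Subsingleton.elim ((c : 𝕜) • (1 : Matrix n n 𝕜)) 0]
  · have hc0 : 0 ≤ c := by simpa using hc.diag_nonneg (i := hn.some)
    rw [norm_smul, RCLike.norm_of_nonneg hc0, norm_one, mul_one]

variable {dS dR : ℕ} {ω : Matrix (Fin dR) (Fin dR) ℂ}

theorem norm_restrictCov_conjTranspose_le (hω : ω.PosSemidef) (hωtr : ω.trace = 1)
    (X Y : Matrix (Fin dS × Fin dR) (Fin dS × Fin dR) ℂ) :
    ‖restrictCov ω Xᴴ Y‖ ≤ √‖restrictCov ω Xᴴ X‖ * √‖restrictCov ω Yᴴ Y‖ := by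
  obtain ⟨R, hR⟩ := exists_restrictCov_eq_conjTranspose_mul dS hω hωtr
  have hnorm (Z) : √‖restrictCov ω Zᴴ Z‖ = ‖R Z‖ := by
    rw [hR, l2_opNorm_conjTranspose_mul_self, Real.sqrt_mul_self (norm_nonneg _)]
  rw [hnorm, hnorm, hR, ← l2_opNorm_conjTranspose (R X)]
  exact l2_opNorm_mul _ _

theorem sqrt_norm_restrictCov_one_kronecker_le (hω : ω.PosSemidef) (hωtr : ω.trace = 1)
    {N : Matrix (Fin dR) (Fin dR) ℂ} (hN : N.IsHermitian) :
    √‖restrictCov ω ((1 : Matrix (Fin dS) (Fin dS) ℂ) ⊗ₖ N) (1 ⊗ₖ N)‖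
      ≤ √((ω * (N * N)).trace.re - (ω * N).trace.re ^ 2) := by
  have hpos := posSemidef_restrictCov_conjTranspose_self hω hωtr
    ((1 : Matrix (Fin dS) (Fin dS) ℂ) ⊗ₖ N)
  rw [conjTranspose_kronecker, conjTranspose_one, hN.eq,
    restrictCov_one_kronecker_self hω.isHermitian hN] at hpos
  rw [restrictCov_one_kronecker_self hω.isHermitian hN]
  exact sqrt_norm_smul_one_le_of_posSemidef hpos

theorem norm_restrictCov_self_le_of_isEffect (hω : ω.PosSemidef) (hωtr : ω.trace = 1)
    {E : Matrix (Fin dS × Fin dR) (Fin dS × Fin dR) ℂ} (hE : IsEffect E) :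
    ‖restrictCov ω E E‖ ≤ ‖restrictMap ω E - restrictMap ω E * restrictMap ω E‖ := by
  have hpos := posSemidef_restrictCov_conjTranspose_self hω hωtr E
  rw [hE.1.isHermitian.eq] at hpos
  refine CStarAlgebra.norm_le_norm_of_nonneg_of_le hpos.nonneg (Matrix.le_iff.2 ?_)
  rw [restrictCov, sub_sub_sub_cancel_right, ← restrictMap_sub]
  exact posSemidef_restrictMap hω hE.posSemidef_sub_mul_self

theorem norm_restrictMap_commutator_le (hω : ω.PosSemidef) (hωtr : ω.trace = 1)
    {N : Matrix (Fin dR) (Fin dR) ℂ} (hN : N.IsHermitian)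
    {E : Matrix (Fin dS × Fin dR) (Fin dS × Fin dR) ℂ} (hE : IsEffect E) :
    ‖restrictMap ω ((1 ⊗ₖ N) * E - E * (1 ⊗ₖ N))‖
      ≤ 2 * √((ω * (N * N)).trace.re - (ω * N).trace.re ^ 2)
        * √‖restrictMap ω E - restrictMap ω E * restrictMap ω E‖ := by
  set M := (1 : Matrix (Fin dS) (Fin dS) ℂ) ⊗ₖ N with hM
  have hMh : Mᴴ = M := by rw [hM, conjTranspose_kronecker, conjTranspose_one, hN.eq]
  have hEh : Eᴴ = E := hE.1.isHermitian.eq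
  have hME := norm_restrictCov_conjTranspose_le hω hωtr M E
  have hEM := norm_restrictCov_conjTranspose_le hω hωtr E M
  rw [hMh, hEh] at hME hEM
  calc ‖restrictMap ω (M * E - E * M)‖ = ‖restrictCov ω M E - restrictCov ω E M‖ := by
        rw [hM, restrictMap_commutator_one_kronecker]
    _ ≤ ‖restrictCov ω M E‖ + ‖restrictCov ω E M‖ := norm_sub_le _ _
    _ ≤ 2 * √‖restrictCov ω M M‖ * √‖restrictCov ω E E‖ := by linarith
    _ ≤ 2 * √((ω * (N * N)).trace.re - (ω * N).trace.re ^ 2)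
          * √‖restrictMap ω E - restrictMap ω E * restrictMap ω E‖ := by
        gcongr 2 * ?_ * √?_
        · exact sqrt_norm_restrictCov_one_kronecker_le hω hωtr hN
        · exact norm_restrictCov_self_le_of_isEffect hω hωtr hE

theorem commutator_localisation_tradeoff_general (NS : Matrix (Fin dS) (Fin dS) ℂ)
    {NR : Matrix (Fin dR) (Fin dR) ℂ} (hNR : NR.IsHermitian)
    (hω : ω.PosSemidef) (hωtr : ω.trace = 1)
    {E : Matrix (Fin dS × Fin dR) (Fin dS × Fin dR) ℂ} (hE : IsEffect E)
    (hEcomm : Commute (NS ⊗ₖ 1 + 1 ⊗ₖ NR) E)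
    {A : Matrix (Fin dS) (Fin dS) ℂ} (hA : ‖A‖ ≤ 1) :
    ‖A * NS - NS * A‖ ≤
      2 * ‖restrictMap ω E - A‖ * ‖NS‖ +
      2 * √((ω * (NR * NR)).trace.re - (ω * NR).trace.re ^ 2) *
        √(2 * ‖restrictMap ω E - A‖ + ‖A - A * A‖) := by
  have hunsharp : ‖restrictMap ω E - restrictMap ω E * restrictMap ω E‖
      ≤ 2 * ‖restrictMap ω E - A‖ + ‖A - A * A‖ :=
    norm_sub_mul_self_le_add hA (hE.restrictMap hω hωtr).one_sub.norm_le_one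
  refine (norm_commutator_le_add A (restrictMap ω E) NS).trans ?_
  rw [restrictMap_commutator_of_conserved hEcomm]
  grw [norm_restrictMap_commutator_le hω hωtr hNR hE, hunsharp]

end OperatorNorm

/-- **Commutator–localisation trade-off**: for an effect `E` on `S+R` commuting with the
additive conserved quantity `N_S ⊗ 1 + 1 ⊗ N_R` and any effect `A` of `S`,
`‖[A,N_S]‖ ≤ 2 D(Γ_ω(E),A) ‖N_S‖ + 2 Δ_ω(N_R) (2 D(Γ_ω(E),A) + V(A))^{1/2}`. -/
theorem commutator_localisation_tradeoff {dS dR : ℕ}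
    (NS : Matrix (Fin dS) (Fin dS) ℂ) (hNS : NS.IsHermitian)
    (NR : Matrix (Fin dR) (Fin dR) ℂ) (hNR : NR.IsHermitian)
    (ω : Matrix (Fin dR) (Fin dR) ℂ) (hω : ω.PosSemidef) (hωtr : ω.trace = 1)
    (E : Matrix (Fin dS × Fin dR) (Fin dS × Fin dR) ℂ) (hE : IsEffect E)
    (hEcomm : (NS ⊗ₖ (1 : Matrix (Fin dR) (Fin dR) ℂ)
        + (1 : Matrix (Fin dS) (Fin dS) ℂ) ⊗ₖ NR) * E
      = E * (NS ⊗ₖ (1 : Matrix (Fin dR) (Fin dR) ℂ)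
        + (1 : Matrix (Fin dS) (Fin dS) ℂ) ⊗ₖ NR))
    (A : Matrix (Fin dS) (Fin dS) ℂ) (hA : IsEffect A) :
    opNorm (A * NS - NS * A) ≤
      2 * opNorm (restrictMap ω E - A) * opNorm NS +
      2 * Real.sqrt (((ω * (NR * NR)).trace).re - (((ω * NR).trace).re) ^ 2) *
        Real.sqrt (2 * opNorm (restrictMap ω E - A) + opNorm (A - A * A)) := by
  simpa only [opNorm_eq_norm] using
    commutator_localisation_tradeoff_general NS hNR hω hωtr hE hEcomm hA.norm_le_one

end
end
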